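/- arXiv:2601.07176 — 4 statements merged into one kernel-verified Lean document; each statement's English description precedes it below -/
import Mathlib

section
/- For every a ∈ ℝ, every real p ≥ 1 and every T > 0 there exists a constant C > 0 such that for all t ∈ (0, T], all x ∈ ℝ, and all ε with 0 < ε ≤ min(1, t/√2): |∫₀^t ∫_ℝ |Γ_a(t−s, x−y) − Γ_a(t−ε/√2−s, x+ε/√2−y) − Γ_a(t−ε/√2−s, x−ε/√2−y) + Γ_a(t−√2·ε−s, x−y)|^p dy ds − ε²/2^p| ≤ C·(ε³ + ε^{1+p}). -/
open MeasureTheory Real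

/-- The damped wave kernel: the fundamental solution of the critically damped
wave operator `∂_tt − ∂_xx + a ∂_t + a²/4`. -/
noncomputable def dampedKernel (a t x : ℝ) : ℝ :=
  if |x| < t then (1 / 2) * Real.exp (-(a * t) / 2) else 0

/-!
In the characteristic coordinates `u = r + z`, `v = r - z` the damped kernel is half the product
of two copies of the one-variable function `φ u = exp (-(a / 4) * u)` on `u > 0`, extended by zero,
so its increment over a characteristic square of side `δ = √2 * ε` is half the product of two
backward differences `φ u - φ (u - δ)`. Up to the factor `2 ^ (-p) / 2`, the space-time integral is
therefore the integral over the triangle `0 < u, 0 < v, u + v ≤ 2 * t` of `F u * F v`, where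
`F u = |φ u - φ (u - δ)| ^ p`. The triangle contains the square of side `δ` at the origin and lies
in the square of side `2 * t`. Now `F = 1 + O(δ)` on `(0, δ]`, where only one of the two terms of
the difference survives, and `F = O(δ ^ p)` on `(δ, 2 * t]`, so both squares give
`δ ^ 2 + O(δ ^ 3 + δ ^ (1 + p) + δ ^ (2 * p))`.
-/

open Set
open scoped Convolution

section Convolution

variable {f g f' g' : ℝ → ℝ} {r R S x : ℝ}

lemma convolution_nonneg (hf : ∀ u, 0 ≤ f u) (hg : ∀ v, 0 ≤ g v) : 0 ≤ (f ⋆ g) x :=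
  integral_nonneg fun u => mul_nonneg (hf u) (hg (x - u))

lemma convolution_mono (h : ConvolutionExistsAt f' g' x (ContinuousLinearMap.lsmul ℝ ℝ) volume)
    (hf : ∀ u, 0 ≤ f u) (hg : ∀ v, 0 ≤ g v) (hff' : ∀ u, f u ≤ f' u) (hgg' : ∀ v, g v ≤ g' v) :
    (f ⋆ g) x ≤ (f' ⋆ g') x :=
  integral_mono_of_nonneg (ae_of_all _ fun u => mul_nonneg (hf u) (hg (x - u))) h.integrable
    (ae_of_all _ fun u =>
      mul_le_mul (hff' u) (hgg' (x - u)) (hg (x - u)) ((hf u).trans (hff' u)))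

lemma convolution_indicator_Ioc_of_le (hf : ∀ u ≤ 0, f u = 0) (hg : ∀ v ≤ 0, g v = 0)
    (hr : r ≤ R) : ((Ioc 0 R).indicator f ⋆ (Ioc 0 R).indicator g) r = (f ⋆ g) r := by
  simp only [convolution_lsmul, smul_eq_mul]
  refine integral_congr_ae (ae_of_all _ fun u => ?_)
  rcases le_or_gt u 0 with hu | hu
  · simp [hf u hu, indicator_apply]
  rcases le_or_gt (r - u) 0 with hv | hv
  · simp [hg _ hv, indicator_apply]
  · have hu' : u ∈ Ioc 0 R := ⟨hu, by linarith⟩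
    have hv' : r - u ∈ Ioc 0 R := ⟨hv, by linarith⟩
    simp only [indicator_of_mem hu', indicator_of_mem hv']

lemma convolution_indicator_Ioc_of_notMem (hr : r ∉ Ioc 0 (2 * S)) :
    ((Ioc 0 S).indicator f ⋆ (Ioc 0 S).indicator g) r = 0 := by
  simp only [convolution_lsmul, smul_eq_mul]
  refine integral_eq_zero_of_ae (ae_of_all _ fun u => ?_)
  by_cases hu : u ∈ Ioc 0 S
  · have hv : r - u ∉ Ioc 0 S := fun hv =>
      hr ⟨by linarith [hu.1, hv.1], by linarith [hu.2, hv.2]⟩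
    simp [indicator_of_notMem hv]
  · simp [indicator_of_notMem hu]

lemma integrable_indicator_Ioc (hR : 0 ≤ R) (hf : IntervalIntegrable f volume 0 R) :
    Integrable ((Ioc 0 R).indicator f) :=
  (integrable_indicator_iff measurableSet_Ioc).2
    ((intervalIntegrable_iff_integrableOn_Ioc_of_le hR).1 hf)

lemma integral_convolution_indicator_Ioc (hR : 0 ≤ R) (hf : IntervalIntegrable f volume 0 R)
    (hg : IntervalIntegrable g volume 0 R) :
    ∫ r, ((Ioc 0 R).indicator f ⋆ (Ioc 0 R).indicator g) r
      = (∫ u in 0..R, f u) * ∫ v in 0..R, g v := by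
  rw [integral_convolution _ (integrable_indicator_Ioc hR hf) (integrable_indicator_Ioc hR hg),
    integral_indicator measurableSet_Ioc, integral_indicator measurableSet_Ioc,
    intervalIntegral.integral_of_le hR, intervalIntegral.integral_of_le hR]
  rfl

lemma intervalIntegral_convolution_eq_setIntegral (hf : ∀ u ≤ 0, f u = 0)
    (hg : ∀ v ≤ 0, g v = 0) (hR : 0 ≤ R) :
    ∫ r in 0..R, (f ⋆ g) r
      = ∫ r in Ioc 0 R, ((Ioc 0 R).indicator f ⋆ (Ioc 0 R).indicator g) r := by
  rw [intervalIntegral.integral_of_le hR]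
  exact setIntegral_congr_fun measurableSet_Ioc fun r hr =>
    (convolution_indicator_Ioc_of_le hf hg hr.2).symm

lemma intervalIntegral_convolution_le_mul (hf₀ : ∀ u ≤ 0, f u = 0) (hg₀ : ∀ v ≤ 0, g v = 0)
    (hf : ∀ u, 0 ≤ f u) (hg : ∀ v, 0 ≤ g v) (hR : 0 ≤ R)
    (hfi : IntervalIntegrable f volume 0 R) (hgi : IntervalIntegrable g volume 0 R) :
    ∫ r in 0..R, (f ⋆ g) r ≤ (∫ u in 0..R, f u) * ∫ v in 0..R, g v := by
  rw [intervalIntegral_convolution_eq_setIntegral hf₀ hg₀ hR,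
    ← integral_convolution_indicator_Ioc hR hfi hgi]
  refine setIntegral_le_integral ((integrable_indicator_Ioc hR hfi).integrable_convolution _
    (integrable_indicator_Ioc hR hgi)) (ae_of_all _ fun r => ?_)
  exact convolution_nonneg (indicator_nonneg fun u _ => hf u) (indicator_nonneg fun v _ => hg v)

lemma mul_le_intervalIntegral_convolution (hf₀ : ∀ u ≤ 0, f u = 0) (hg₀ : ∀ v ≤ 0, g v = 0)
    (hf : ∀ u, 0 ≤ f u) (hg : ∀ v, 0 ≤ g v) (hS : 0 ≤ S) (hSR : 2 * S ≤ R)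
    (hfi : IntervalIntegrable f volume 0 R) (hgi : IntervalIntegrable g volume 0 R) :
    (∫ u in 0..S, f u) * ∫ v in 0..S, g v ≤ ∫ r in 0..R, (f ⋆ g) r := by
  have hR : 0 ≤ R := by linarith
  have hsub : uIcc 0 S ⊆ uIcc 0 R := by
    rw [uIcc_of_le hS, uIcc_of_le hR]
    exact Icc_subset_Icc_right (by linarith)
  have hsub' : Ioc 0 S ⊆ Ioc 0 R := Ioc_subset_Ioc_right (by linarith)
  have hfS := integrable_indicator_Ioc hS (hfi.mono_set hsub)
  have hgS := integrable_indicator_Ioc hS (hgi.mono_set hsub)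
  have hfR := integrable_indicator_Ioc hR hfi
  have hgR := integrable_indicator_Ioc hR hgi
  rw [intervalIntegral_convolution_eq_setIntegral hf₀ hg₀ hR,
    ← integral_convolution_indicator_Ioc hS (hfi.mono_set hsub) (hgi.mono_set hsub),
    ← setIntegral_eq_integral_of_forall_compl_eq_zero fun r hr =>
      convolution_indicator_Ioc_of_notMem fun hr' => hr (Ioc_subset_Ioc_right hSR hr')]
  refine setIntegral_mono_ae (hfS.integrable_convolution _ hgS).integrableOn
    (hfR.integrable_convolution _ hgR).integrableOn ?_
  filter_upwards [hfR.ae_convolution_exists (ContinuousLinearMap.lsmul ℝ ℝ) hgR] with r hr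
  exact convolution_mono hr (indicator_nonneg fun u _ => hf u) (indicator_nonneg fun v _ => hg v)
    (indicator_le_indicator_of_subset hsub' hf) (indicator_le_indicator_of_subset hsub' hg)

end Convolution

lemma abs_exp_sub_one_le_mul_exp_abs (x : ℝ) : |exp x - 1| ≤ |x| * exp |x| := by
  simpa [← Complex.ofReal_exp, ← Complex.ofReal_one, ← Complex.ofReal_sub] using
    Complex.norm_exp_sub_sum_le_norm_mul_exp x 1

lemma abs_exp_neg_mul_sub_one_le {c δ u : ℝ} (hu : u ∈ Icc 0 δ) :
    |exp (-(c * u)) - 1| ≤ |c| * δ * exp (|c| * δ) := by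
  have hδ : 0 ≤ δ := hu.1.trans hu.2
  have hle : |-(c * u)| ≤ |c| * δ := by
    rw [abs_neg, abs_mul, abs_of_nonneg hu.1]
    gcongr
    exact hu.2
  calc |exp (-(c * u)) - 1| ≤ |-(c * u)| * exp |-(c * u)| := abs_exp_sub_one_le_mul_exp_abs _
    _ ≤ |c| * δ * exp (|c| * δ) := by gcongr

lemma mul_rpow_le_rpow_mul_rpow {c ε q Q : ℝ} (hc : 1 ≤ c) (hε : 0 ≤ ε) (hq : q ≤ Q) :
    (c * ε) ^ q ≤ c ^ Q * ε ^ q := by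
  rw [Real.mul_rpow (zero_le_one.trans hc) hε]
  gcongr

lemma abs_sub_sq_le_of_sq_le_of_le_sq {A B E I K η : ℝ} (hA : 0 ≤ A) (hE : 0 ≤ E) (hδ : 0 ≤ δ)
    (hδB : δ ≤ B) (hK : 0 ≤ K) (hAδ : |A - δ| ≤ K * δ ^ 2) (hEη : E ≤ K * η)
    (hlower : A ^ 2 ≤ I) (hupper : I ≤ (A + E) ^ 2) :
    |I - δ ^ 2| ≤ (2 * K * (1 + K * B) + K ^ 2) * (δ ^ 3 + δ * η + η ^ 2) := by
  have hAle : A ≤ δ * (1 + K * B) := by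
    have : K * δ ^ 2 ≤ K * (δ * B) := by rw [sq]; gcongr
    linarith [(abs_le.1 hAδ).2]
  have hKB : 1 ≤ 1 + K * B := by nlinarith [mul_nonneg hK (hδ.trans hδB)]
  have hsq : |A ^ 2 - δ ^ 2| ≤ 2 * K * (1 + K * B) * δ ^ 3 :=
    calc |A ^ 2 - δ ^ 2| = |A - δ| * (A + δ) := by
          rw [sq_sub_sq, abs_mul, abs_of_nonneg (add_nonneg hA hδ), mul_comm]
      _ ≤ K * δ ^ 2 * (δ * (1 + K * B) + δ * (1 + K * B)) := by
          gcongr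
          exact le_mul_of_one_le_right hδ hKB
      _ = 2 * K * (1 + K * B) * δ ^ 3 := by ring
  have hcross : 2 * A * E ≤ 2 * K * (1 + K * B) * (δ * η) :=
    calc 2 * A * E ≤ 2 * (δ * (1 + K * B)) * (K * η) := by gcongr
      _ = 2 * K * (1 + K * B) * (δ * η) := by ring
  have htail : E ^ 2 ≤ K ^ 2 * η ^ 2 := by
    rw [← mul_pow]
    gcongr
  have hKη : 0 ≤ K * η := hE.trans hEη
  have hrest : 0 ≤ K ^ 2 * (δ ^ 3 + δ * η) + 2 * K * (1 + K * B) * η ^ 2 := by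
    have : K ^ 2 * (δ * η) = K * δ * (K * η) := by ring
    rw [mul_add, this]
    positivity
  rw [abs_le] at hsq ⊢
  constructor <;> nlinarith

section CausalExp

/-- The causal exponential, equal to `exp (-(c * u))` for `u > 0` and to `0` otherwise. It is the
factor of the damped kernel (with `c = a / 4`) in each characteristic coordinate. -/
noncomputable def causalExp (c : ℝ) : ℝ → ℝ := (Ioi 0).indicator fun u => exp (-(c * u))

/-- The `p`-th power of the absolute backward difference of `causalExp c` with step `δ`, the
density of the rectangular increment of the damped kernel in each characteristic coordinate. -/
noncomputable def causalExpDiffPow (c δ p u : ℝ) : ℝ :=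
  |causalExp c u - causalExp c (u - δ)| ^ p

variable {c δ p u R : ℝ}

lemma causalExp_of_pos (hu : 0 < u) : causalExp c u = exp (-(c * u)) := indicator_of_mem hu _

lemma causalExp_of_nonpos (hu : u ≤ 0) : causalExp c u = 0 := indicator_of_notMem hu.not_gt _

lemma causalExpDiffPow_nonneg : 0 ≤ causalExpDiffPow c δ p u := Real.rpow_nonneg (abs_nonneg _) p

lemma causalExpDiffPow_of_nonpos (hδ : 0 ≤ δ) (hp : p ≠ 0) (hu : u ≤ 0) :
    causalExpDiffPow c δ p u = 0 := by
  rw [causalExpDiffPow, causalExp_of_nonpos hu, causalExp_of_nonpos (by linarith), sub_zero,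
    abs_zero, Real.zero_rpow hp]

lemma causalExpDiffPow_of_mem_Ioc (hu : u ∈ Ioc 0 δ) :
    causalExpDiffPow c δ p u = exp (-(c * p * u)) := by
  rw [causalExpDiffPow, causalExp_of_pos hu.1, causalExp_of_nonpos (by linarith [hu.2]), sub_zero,
    abs_of_pos (exp_pos _), ← Real.exp_mul]
  ring_nf

lemma causalExpDiffPow_of_lt (hδ : 0 ≤ δ) (hu : δ < u) :
    causalExpDiffPow c δ p u = |exp (-(c * u)) * (1 - exp (c * δ))| ^ p := by
  rw [causalExpDiffPow, causalExp_of_pos (hδ.trans_lt hu), causalExp_of_pos (sub_pos.2 hu),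
    mul_one_sub, ← exp_add]
  ring_nf

lemma intervalIntegrable_causalExpDiffPow_tip (hδ : 0 ≤ δ) :
    IntervalIntegrable (causalExpDiffPow c δ p) volume 0 δ := by
  have hcont : Continuous fun u => exp (-(c * p * u)) := by fun_prop
  refine (hcont.intervalIntegrable 0 δ).congr fun u hu => ?_
  rw [uIoc_of_le hδ] at hu
  exact (causalExpDiffPow_of_mem_Ioc hu).symm

lemma intervalIntegrable_causalExpDiffPow_tail (hδ : 0 ≤ δ) (hp : 0 ≤ p) (hR : δ ≤ R) :
    IntervalIntegrable (causalExpDiffPow c δ p) volume δ R := by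
  have hcont : Continuous fun u => |exp (-(c * u)) * (1 - exp (c * δ))| ^ p :=
    Continuous.rpow_const (by fun_prop) fun _ => Or.inr hp
  refine (hcont.intervalIntegrable δ R).congr fun u hu => ?_
  rw [uIoc_of_le hR] at hu
  exact (causalExpDiffPow_of_lt hδ hu.1).symm

lemma abs_integral_causalExpDiffPow_tip_sub_le (hδ : 0 ≤ δ) :
    |(∫ u in 0..δ, causalExpDiffPow c δ p u) - δ| ≤ |c * p| * exp (|c * p| * δ) * δ ^ 2 := by
  have hsub : (∫ u in 0..δ, causalExpDiffPow c δ p u) - δ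
      = ∫ u in 0..δ, (causalExpDiffPow c δ p u - 1) := by
    rw [intervalIntegral.integral_sub (intervalIntegrable_causalExpDiffPow_tip hδ) (by simp),
      intervalIntegral.integral_const, smul_eq_mul, sub_zero, mul_one]
  have hbound : ∀ u ∈ uIoc 0 δ, ‖causalExpDiffPow c δ p u - 1‖ ≤
      |c * p| * δ * exp (|c * p| * δ) := by
    intro u hu
    rw [uIoc_of_le hδ] at hu
    rw [causalExpDiffPow_of_mem_Ioc hu]
    exact abs_exp_neg_mul_sub_one_le (Ioc_subset_Icc_self hu)
  rw [hsub]
  calc |∫ u in 0..δ, (causalExpDiffPow c δ p u - 1)|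
      ≤ |c * p| * δ * exp (|c * p| * δ) * |δ - 0| :=
        intervalIntegral.norm_integral_le_of_norm_le_const hbound
    _ = |c * p| * exp (|c * p| * δ) * δ ^ 2 := by
        rw [sub_zero, abs_of_nonneg hδ]
        ring

lemma causalExpDiffPow_le (hδ : 0 ≤ δ) (hp : 0 ≤ p) (hu : u ∈ Ioc δ R) :
    causalExpDiffPow c δ p u ≤ (|c| * exp (2 * |c| * R)) ^ p * δ ^ p := by
  have hR : δ ≤ R := hu.1.le.trans hu.2
  have hdecay : exp (-(c * u)) ≤ exp (|c| * R) := by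
    gcongr
    calc -(c * u) ≤ |c| * u := by nlinarith [neg_abs_le c, hu.1]
      _ ≤ |c| * R := by gcongr; exact hu.2
  have hstep : |1 - exp (c * δ)| ≤ |c| * δ * exp (|c| * R) := by
    have := abs_exp_neg_mul_sub_one_le (c := -c) (right_mem_Icc.2 hδ)
    rw [neg_mul, neg_neg, abs_neg, abs_sub_comm] at this
    exact this.trans (by gcongr)
  rw [causalExpDiffPow_of_lt hδ hu.1, ← Real.mul_rpow (by positivity) hδ, abs_mul,
    abs_of_pos (exp_pos _)]
  refine Real.rpow_le_rpow (by positivity) ?_ hp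
  calc exp (-(c * u)) * |1 - exp (c * δ)| ≤ exp (|c| * R) * (|c| * δ * exp (|c| * R)) := by gcongr
    _ = |c| * exp (2 * |c| * R) * δ := by
        rw [show 2 * |c| * R = |c| * R + |c| * R by ring, exp_add]
        ring

lemma integral_causalExpDiffPow_tail_le (hδ : 0 ≤ δ) (hp : 0 ≤ p) (hR : δ ≤ R) :
    ∫ u in δ..R, causalExpDiffPow c δ p u ≤ R * (|c| * exp (2 * |c| * R)) ^ p * δ ^ p := by
  have hbound : ∀ u ∈ uIoc δ R, ‖causalExpDiffPow c δ p u‖ ≤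
      (|c| * exp (2 * |c| * R)) ^ p * δ ^ p := by
    intro u hu
    rw [uIoc_of_le hR] at hu
    rw [Real.norm_of_nonneg causalExpDiffPow_nonneg]
    exact causalExpDiffPow_le hδ hp hu
  calc ∫ u in δ..R, causalExpDiffPow c δ p u
      ≤ (|c| * exp (2 * |c| * R)) ^ p * δ ^ p * |R - δ| :=
        (Real.le_norm_self _).trans (intervalIntegral.norm_integral_le_of_norm_le_const hbound)
    _ ≤ (|c| * exp (2 * |c| * R)) ^ p * δ ^ p * R := by
        rw [abs_of_nonneg (sub_nonneg.2 hR)]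
        gcongr
        exact sub_le_self R hδ
    _ = R * (|c| * exp (2 * |c| * R)) ^ p * δ ^ p := by ring

lemma exists_integral_causalExpDiffPow_bounds (c : ℝ) (hp : 0 ≤ p) {B : ℝ} (hB : 0 ≤ B) :
    ∃ K : ℝ, 0 ≤ K ∧ ∀ δ R : ℝ, 0 ≤ δ → δ ≤ R → R ≤ B →
      |(∫ u in 0..δ, causalExpDiffPow c δ p u) - δ| ≤ K * δ ^ 2 ∧
        ∫ u in δ..R, causalExpDiffPow c δ p u ≤ K * δ ^ p := by
  refine ⟨|c * p| * exp (|c * p| * B) + B * (|c| * exp (2 * |c| * B)) ^ p, by positivity,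
    fun δ R hδ hδR hRB => ⟨?_, ?_⟩⟩
  · refine (abs_integral_causalExpDiffPow_tip_sub_le hδ).trans ?_
    gcongr
    refine le_add_of_le_of_nonneg ?_ (by positivity)
    gcongr
    exact hδR.trans hRB
  · refine (integral_causalExpDiffPow_tail_le hδ hp hδR).trans ?_
    gcongr
    refine le_add_of_nonneg_of_le (by positivity) ?_
    gcongr

lemma exists_abs_integral_convolution_causalExpDiffPow_sub_le (c : ℝ) (hp : 0 < p) {B : ℝ}
    (hB : 0 ≤ B) :
    ∃ C : ℝ, 0 < C ∧ ∀ δ R : ℝ, 0 < δ → 2 * δ ≤ R → R ≤ B →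
      |(∫ r in 0..R, (causalExpDiffPow c δ p ⋆ causalExpDiffPow c δ p) r) - δ ^ 2| ≤
        C * (δ ^ 3 + δ ^ (1 + p) + δ ^ (2 * p)) := by
  obtain ⟨K, hK, hbounds⟩ := exists_integral_causalExpDiffPow_bounds c hp.le hB
  refine ⟨2 * K * (1 + K * B) + K ^ 2 + 1, by positivity, fun δ R hδ hδR hRB => ?_⟩
  have hδR' : δ ≤ R := by linarith
  obtain ⟨hA, hE⟩ := hbounds δ R hδ.le hδR' hRB
  have htip := intervalIntegrable_causalExpDiffPow_tip (c := c) (p := p) hδ.le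
  have htail := intervalIntegrable_causalExpDiffPow_tail (c := c) hδ.le hp.le hδR'
  have hzero (u : ℝ) (hu : u ≤ 0) : causalExpDiffPow c δ p u = 0 :=
    causalExpDiffPow_of_nonpos hδ.le hp.ne' hu
  have hnonneg (u : ℝ) : 0 ≤ causalExpDiffPow c δ p u := causalExpDiffPow_nonneg
  have hlower := mul_le_intervalIntegral_convolution hzero hzero hnonneg hnonneg hδ.le hδR
    (htip.trans htail) (htip.trans htail)
  have hupper := intervalIntegral_convolution_le_mul hzero hzero hnonneg hnonneg (by linarith)
    (htip.trans htail) (htip.trans htail)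
  rw [← sq] at hlower
  rw [← intervalIntegral.integral_add_adjacent_intervals htip htail, ← sq] at hupper
  have hbound := abs_sub_sq_le_of_sq_le_of_le_sq
    (intervalIntegral.integral_nonneg hδ.le fun u _ => hnonneg u)
    (intervalIntegral.integral_nonneg hδR' fun u _ => hnonneg u)
    hδ.le (hδR'.trans hRB) hK hA hE hlower hupper
  have hcross : δ * δ ^ p = δ ^ (1 + p) := by rw [Real.rpow_add hδ, Real.rpow_one]
  have hsq : (δ ^ p) ^ 2 = δ ^ (2 * p) := by rw [mul_comm, Real.rpow_mul hδ.le, Real.rpow_two]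
  rw [hcross, hsq] at hbound
  exact hbound.trans
    (mul_le_mul_of_nonneg_right (le_add_of_nonneg_right zero_le_one) (by positivity))

end CausalExp

section Kernel

/-- The rectangular increment of the damped kernel over the characteristic square whose vertex
furthest in time is `(r, z)`, with side `δ` in the coordinates `r + z` and `r - z`. -/
noncomputable def kernelIncrement (a δ r z : ℝ) : ℝ :=
  dampedKernel a r z - dampedKernel a (r - δ / 2) (z + δ / 2)
    - dampedKernel a (r - δ / 2) (z - δ / 2) + dampedKernel a (r - δ) z

variable {a δ p r t x z : ℝ}

lemma dampedKernel_eq_causalExp_mul_causalExp :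
    dampedKernel a r z = 1 / 2 * causalExp (a / 4) (r + z) * causalExp (a / 4) (r - z) := by
  by_cases hz : |z| < r
  · have h := abs_lt.1 hz
    rw [dampedKernel, if_pos hz, causalExp_of_pos (by linarith), causalExp_of_pos (by linarith),
      mul_assoc, ← exp_add]
    ring_nf
  · rw [dampedKernel, if_neg hz]
    rcases le_abs'.1 (not_lt.1 hz) with h | h
    · rw [causalExp_of_nonpos (by linarith : r + z ≤ 0), mul_zero, zero_mul]
    · rw [causalExp_of_nonpos (by linarith : r - z ≤ 0), mul_zero]

lemma kernelIncrement_eq_mul :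
    kernelIncrement a δ r z =
      1 / 2 * (causalExp (a / 4) (r + z) - causalExp (a / 4) (r + z - δ))
        * (causalExp (a / 4) (r - z) - causalExp (a / 4) (r - z - δ)) := by
  simp only [kernelIncrement, dampedKernel_eq_causalExp_mul_causalExp]
  ring_nf

lemma abs_kernelIncrement_rpow :
    |kernelIncrement a δ r z| ^ p =
      (1 / 2) ^ p *
        (causalExpDiffPow (a / 4) δ p (r + z) * causalExpDiffPow (a / 4) δ p (r - z)) := by
  rw [kernelIncrement_eq_mul, abs_mul, abs_mul, Real.mul_rpow (by positivity) (abs_nonneg _),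
    Real.mul_rpow (abs_nonneg _) (abs_nonneg _), abs_of_pos one_half_pos, mul_assoc]
  rfl

lemma integral_abs_kernelIncrement_rpow :
    ∫ z, |kernelIncrement a δ r z| ^ p =
      (1 / 2) ^ p * (causalExpDiffPow (a / 4) δ p ⋆ causalExpDiffPow (a / 4) δ p) (2 * r) := by
  simp only [abs_kernelIncrement_rpow, integral_const_mul, convolution_lsmul, smul_eq_mul]
  rw [← integral_add_left_eq_self
    (fun u => causalExpDiffPow (a / 4) δ p u * causalExpDiffPow (a / 4) δ p (2 * r - u)) r]
  simp only [two_mul, add_sub_add_left_eq_sub]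

lemma integral_integral_abs_kernelIncrement_rpow :
    ∫ r in 0..t, ∫ z, |kernelIncrement a δ r z| ^ p =
      (1 / 2) ^ (p + 1) * ∫ r in 0..2 * t,
        (causalExpDiffPow (a / 4) δ p ⋆ causalExpDiffPow (a / 4) δ p) r := by
  simp only [integral_abs_kernelIncrement_rpow, intervalIntegral.integral_const_mul]
  rw [intervalIntegral.integral_comp_mul_left _ two_ne_zero, mul_zero, smul_eq_mul, ← mul_assoc,
    Real.rpow_add_one (by norm_num), one_div]

lemma setIntegral_integral_dampedKernel_increment (ht : 0 ≤ t) (ε : ℝ) :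
    ∫ s in Ioc 0 t, ∫ y,
        |dampedKernel a (t - s) (x - y)
          - dampedKernel a (t - ε / √2 - s) (x + ε / √2 - y)
          - dampedKernel a (t - ε / √2 - s) (x - ε / √2 - y)
          + dampedKernel a (t - √2 * ε - s) (x - y)| ^ p
      = ∫ r in 0..t, ∫ z, |kernelIncrement a (√2 * ε) r z| ^ p := by
  have hhalf : √2 * ε / 2 = ε / √2 := by
    rw [div_eq_div_iff two_ne_zero (by positivity), mul_right_comm, Real.mul_self_sqrt zero_le_two,
      mul_comm]
  have hslice (s : ℝ) :
      ∫ y, |dampedKernel a (t - s) (x - y)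
          - dampedKernel a (t - ε / √2 - s) (x + ε / √2 - y)
          - dampedKernel a (t - ε / √2 - s) (x - ε / √2 - y)
          + dampedKernel a (t - √2 * ε - s) (x - y)| ^ p
        = ∫ z, |kernelIncrement a (√2 * ε) (t - s) z| ^ p := by
    rw [← integral_sub_left_eq_self (fun z => |kernelIncrement a (√2 * ε) (t - s) z| ^ p) volume x]
    simp only [kernelIncrement, hhalf, sub_right_comm _ _ s, sub_right_comm x _ (ε / √2),
      sub_add_eq_add_sub]
  simp only [hslice]
  rw [← intervalIntegral.integral_of_le ht,
    intervalIntegral.integral_comp_sub_left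
      (fun r => ∫ z, |kernelIncrement a (√2 * ε) r z| ^ p) t, sub_self, sub_zero]

end Kernel

theorem stmt8_general (a : ℝ) {p : ℝ} (hp : 0 < p) {T : ℝ} (hT : 0 < T) :
    ∃ C : ℝ, 0 < C ∧ ∀ t ∈ Ioc 0 T, ∀ x ε : ℝ, 0 < ε → ε ≤ t / √2 →
      |(∫ s in Ioc 0 t, ∫ y,
          |dampedKernel a (t - s) (x - y)
            - dampedKernel a (t - ε / √2 - s) (x + ε / √2 - y)
            - dampedKernel a (t - ε / √2 - s) (x - ε / √2 - y)
            + dampedKernel a (t - √2 * ε - s) (x - y)| ^ p)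
        - ε ^ 2 / 2 ^ p| ≤ C * (ε ^ 3 + ε ^ (1 + p) + ε ^ (2 * p)) := by
  obtain ⟨C, hC, hbound⟩ := exists_abs_integral_convolution_causalExpDiffPow_sub_le (a / 4) hp
    (by positivity : 0 ≤ 2 * T)
  refine ⟨C * √2 ^ (3 + 2 * p), by positivity, fun t ht x ε hε hεt => ?_⟩
  have hδt : √2 * ε ≤ t := by rwa [mul_comm, ← le_div_iff₀ (by positivity)]
  have hmain : ε ^ 2 / 2 ^ p = (1 / 2) ^ (p + 1) * (√2 * ε) ^ 2 := by
    rw [mul_pow, Real.sq_sqrt zero_le_two, Real.rpow_add_one (by norm_num),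
      Real.div_rpow zero_le_one zero_le_two, Real.one_rpow]
    ring
  have hscale {q : ℝ} (hq : q ≤ 3 + 2 * p) : (√2 * ε) ^ q ≤ √2 ^ (3 + 2 * p) * ε ^ q :=
    mul_rpow_le_rpow_mul_rpow (Real.one_le_sqrt.2 one_le_two) hε.le hq
  have hcube : (√2 * ε) ^ 3 ≤ √2 ^ (3 + 2 * p) * ε ^ 3 :=
    mod_cast hscale (q := (3 : ℕ)) (by push_cast; linarith)
  rw [setIntegral_integral_dampedKernel_increment ht.1.le, hmain,
    integral_integral_abs_kernelIncrement_rpow, ← mul_sub, abs_mul, abs_of_pos (by positivity)]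
  calc _ ≤ 1 * (C * ((√2 * ε) ^ 3 + (√2 * ε) ^ (1 + p) + (√2 * ε) ^ (2 * p))) := by
        gcongr
        · exact Real.rpow_le_one (by norm_num) (by norm_num) (by linarith)
        · exact hbound _ _ (by positivity) (by linarith) (by linarith [ht.2])
    _ ≤ 1 * (C * (√2 ^ (3 + 2 * p) * ε ^ 3 + √2 ^ (3 + 2 * p) * ε ^ (1 + p)
          + √2 ^ (3 + 2 * p) * ε ^ (2 * p))) := by
        gcongr
        · exact hscale (by linarith)
        · exact hscale (by linarith)
    _ = C * √2 ^ (3 + 2 * p) * (ε ^ 3 + ε ^ (1 + p) + ε ^ (2 * p)) := by ring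

theorem stmt8 (a : ℝ) (p : ℝ) (hp : 1 ≤ p) (T : ℝ) (hT : 0 < T) :
    ∃ C : ℝ, 0 < C ∧ ∀ t ∈ Set.Ioc (0 : ℝ) T, ∀ x : ℝ, ∀ ε : ℝ,
      0 < ε → ε ≤ min 1 (t / Real.sqrt 2) →
      |(∫ s in Set.Ioc (0 : ℝ) t, ∫ y : ℝ,
          |dampedKernel a (t - s) (x - y)
            - dampedKernel a (t - ε / Real.sqrt 2 - s) (x + ε / Real.sqrt 2 - y)
            - dampedKernel a (t - ε / Real.sqrt 2 - s) (x - ε / Real.sqrt 2 - y)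
            + dampedKernel a (t - Real.sqrt 2 * ε - s) (x - y)| ^ p)
        - ε ^ 2 / 2 ^ p| ≤ C * (ε ^ 3 + ε ^ (1 + p)) := by
  obtain ⟨C, hC, hbound⟩ := stmt8_general a (zero_lt_one.trans_le hp) hT
  refine ⟨C * 2, by positivity, fun t ht x ε hε hεt =>
    (hbound t ht x ε hε (hεt.trans (min_le_right _ _))).trans ?_⟩
  have hpow : ε ^ (2 * p) ≤ ε ^ (1 + p) :=
    Real.rpow_le_rpow_of_exponent_ge hε (hεt.trans (min_le_left _ _)) (by linarith)
  rw [mul_assoc]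
  gcongr
  linarith [pow_pos hε 3]
end

section
/- For every t > 0, every x ∈ ℝ and every ε with 0 < ε ≤ t/√2, the set D₄ := {(s, y) ∈ ℝ × ℝ : 0 ≤ s ≤ t, |x − y| ≤ t − s, |x + ε/√2 − y| ≥ t − ε/√2 − s, |x − ε/√2 − y| ≥ t − ε/√2 − s} has two-dimensional Lebesgue measure exactly ε². -/
open MeasureTheory Real

/-! In the null coordinates `u = τ + z`, `v = τ - z` of the displacement `(τ, z) = (t - s, x - y)`
from the apex, the backward light cone is the quadrant `0 ≤ u`, `0 ≤ v`. Moving the apex by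
`(-a, a)` only shifts `v` by `-2a`, and moving it by `(-b, -b)` only shifts `u` by `-2b`. So, up to
the null boundary of the cone, what is left of the quadrant outside both shifted cones is the
rectangle `[0, 2b] × [0, 2a]`. Its area `4ab` is twice the area in the original coordinates, and
`a = b = ε / √2` gives `ε²`. -/

/-- The null (light-cone) coordinates `(τ + z, τ - z)` of a plane vector `(τ, z)` with time
component `τ`, in which light cones become quadrants. They are not normalized by `1 / √2`, so
areas double. -/
def nullCoordinates : ℝ × ℝ →ₗ[ℝ] ℝ × ℝ :=
  (LinearMap.fst ℝ ℝ ℝ + LinearMap.snd ℝ ℝ ℝ).prod (LinearMap.fst ℝ ℝ ℝ - LinearMap.snd ℝ ℝ ℝ)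

theorem nullCoordinates_apply (w : ℝ × ℝ) : nullCoordinates w = (w.1 + w.2, w.1 - w.2) := rfl

theorem det_nullCoordinates : LinearMap.det nullCoordinates = -2 := by
  rw [← LinearMap.det_toMatrix (.finTwoProd ℝ), Matrix.det_fin_two]
  norm_num [LinearMap.toMatrix_apply, nullCoordinates_apply]

theorem det_nullCoordinates_ne_zero : LinearMap.det nullCoordinates ≠ 0 := by
  norm_num [det_nullCoordinates]

theorem abs_snd_le_fst_iff_nullCoordinates_nonneg (w : ℝ × ℝ) :
    |w.2| ≤ w.1 ↔ 0 ≤ nullCoordinates w := by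
  rw [nullCoordinates_apply, Prod.le_def, abs_le, neg_le_iff_add_nonneg', ← sub_nonneg (a := w.1)]
  rfl

theorem fst_le_abs_snd_iff_nullCoordinates_nonpos (w : ℝ × ℝ) :
    w.1 ≤ |w.2| ↔ (nullCoordinates w).1 ≤ 0 ∨ (nullCoordinates w).2 ≤ 0 := by
  rw [nullCoordinates_apply, le_abs, or_comm, le_neg_iff_add_nonpos_right, ← sub_nonpos (b := w.2)]

theorem volume_nullCoordinates_sub_mem (p : ℝ × ℝ) (S : Set (ℝ × ℝ)) :
    volume {q | nullCoordinates (p - q) ∈ S} = ENNReal.ofReal (1 / 2) * volume S := by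
  calc volume {q | nullCoordinates (p - q) ∈ S}
      = volume (nullCoordinates ⁻¹' S) :=
        (Measure.measurePreserving_sub_left volume p).measure_preimage_emb
          (measurableEmbedding_subLeft p) (nullCoordinates ⁻¹' S)
    _ = ENNReal.ofReal (1 / 2) * volume S := by
        rw [Measure.addHaar_preimage_linearMap _ det_nullCoordinates_ne_zero, det_nullCoordinates]
        norm_num

theorem ae_nullCoordinates_sub_ne_zero (p : ℝ × ℝ) :
    ∀ᵐ q, (nullCoordinates (p - q)).1 ≠ 0 ∧ (nullCoordinates (p - q)).2 ≠ 0 := by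
  have hN : Measure.QuasiMeasurePreserving fun q => nullCoordinates (p - q) :=
    (Measure.LinearMap.quasiMeasurePreserving volume _ det_nullCoordinates_ne_zero).comp
      (Measure.measurePreserving_sub_left volume p).quasiMeasurePreserving
  exact ((Measure.quasiMeasurePreserving_fst.comp hN).ae (volume.ae_ne 0)).and
    ((Measure.quasiMeasurePreserving_snd.comp hN).ae (volume.ae_ne 0))

theorem volume_Icc_zero_prod (a b : ℝ) :
    volume (Set.Icc (0 : ℝ × ℝ) (a, b)) = ENNReal.ofReal a * ENNReal.ofReal b := by
  rw [← Prod.mk_zero_zero, Set.Icc_prod_eq, Measure.volume_eq_prod, Measure.prod_prod,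
    Real.volume_Icc, Real.volume_Icc, sub_zero, sub_zero]

theorem cone_diff_iff_nullCoordinates_mem_Icc {t x a b : ℝ} (hab : a + b ≤ t) {q : ℝ × ℝ}
    (hu : (nullCoordinates ((t, x) - q)).1 ≠ 0) (hv : (nullCoordinates ((t, x) - q)).2 ≠ 0) :
    (0 ≤ q.1 ∧ q.1 ≤ t ∧ |x - q.2| ≤ t - q.1
        ∧ t - a - q.1 ≤ |x + a - q.2| ∧ t - b - q.1 ≤ |x - b - q.2|)
      ↔ nullCoordinates ((t, x) - q) ∈ Set.Icc 0 (2 * b, 2 * a) := by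
  set w := nullCoordinates ((t, x) - q) with hw
  have hcone : |x - q.2| ≤ t - q.1 ↔ 0 ≤ w :=
    abs_snd_le_fst_iff_nullCoordinates_nonneg ((t, x) - q)
  have hright : t - a - q.1 ≤ |x + a - q.2| ↔ w.1 ≤ 0 ∨ w.2 ≤ 2 * a := by
    have hshift : nullCoordinates ((t - a, x + a) - q) = w - (0, 2 * a) := by
      ext <;> simp only [hw, nullCoordinates_apply, Prod.fst_sub, Prod.snd_sub] <;> ring
    simpa [hshift] using fst_le_abs_snd_iff_nullCoordinates_nonpos ((t - a, x + a) - q)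
  have hleft : t - b - q.1 ≤ |x - b - q.2| ↔ w.1 ≤ 2 * b ∨ w.2 ≤ 0 := by
    have hshift : nullCoordinates ((t - b, x - b) - q) = w - (2 * b, 0) := by
      ext <;> simp only [hw, nullCoordinates_apply, Prod.fst_sub, Prod.snd_sub] <;> ring
    simpa [hshift] using fst_le_abs_snd_iff_nullCoordinates_nonpos ((t - b, x - b) - q)
  have htime : w.1 + w.2 = 2 * (t - q.1) := by
    rw [hw, nullCoordinates_apply, Prod.fst_sub]
    ring
  rw [hcone, hright, hleft, Set.mem_Icc, Prod.le_def, Prod.le_def, Prod.fst_zero, Prod.snd_zero]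
  constructor
  · rintro ⟨-, -, ⟨hu₀, hv₀⟩, hright, hleft⟩
    exact ⟨⟨hu₀, hv₀⟩, hleft.resolve_right (hv₀.lt_of_ne' hv).not_ge,
      hright.resolve_left (hu₀.lt_of_ne' hu).not_ge⟩
  · rintro ⟨⟨hu₀, hv₀⟩, hu₁, hv₁⟩
    exact ⟨by linarith, by linarith, ⟨hu₀, hv₀⟩, Or.inr hv₁, Or.inl hu₁⟩

theorem two_mul_div_sqrt_two_mul_self (r : ℝ) : 2 * (r / √2) * (r / √2) = r ^ 2 := by
  rw [mul_assoc, div_mul_div_comm, mul_self_sqrt zero_le_two, mul_div_cancel₀ _ two_ne_zero, sq]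

theorem div_sqrt_two_add_self (r : ℝ) : r / √2 + r / √2 = r * √2 := by
  rw [← two_mul, mul_div_left_comm, div_sqrt]

/-- For `a < 0` or `b < 0` the region is a null set, in agreement with `ENNReal.ofReal` truncating
at `0`. -/
theorem stmt10_general {t x a b : ℝ} (hab : a + b ≤ t) :
    volume {p : ℝ × ℝ | 0 ≤ p.1 ∧ p.1 ≤ t ∧ |x - p.2| ≤ t - p.1
        ∧ t - a - p.1 ≤ |x + a - p.2| ∧ t - b - p.1 ≤ |x - b - p.2|}
      = ENNReal.ofReal (2 * a) * ENNReal.ofReal b := by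
  calc _ = volume {p | nullCoordinates ((t, x) - p) ∈ Set.Icc 0 (2 * b, 2 * a)} := by
        apply measure_congr
        filter_upwards [ae_nullCoordinates_sub_ne_zero (t, x)] with p hp
        exact propext (cone_diff_iff_nullCoordinates_mem_Icc hab hp.1 hp.2)
    _ = ENNReal.ofReal (1 / 2) * (ENNReal.ofReal (2 * b) * ENNReal.ofReal (2 * a)) := by
        rw [volume_nullCoordinates_sub_mem, volume_Icc_zero_prod]
    _ = ENNReal.ofReal (2 * a) * ENNReal.ofReal b := by
        rw [← mul_assoc, ← ENNReal.ofReal_mul one_half_pos.le, mul_comm]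
        ring_nf

theorem stmt10 (t x ε : ℝ) (ht : 0 < t) (hε : 0 < ε) (hεt : ε ≤ t / Real.sqrt 2) :
    volume {p : ℝ × ℝ | 0 ≤ p.1 ∧ p.1 ≤ t ∧ |x - p.2| ≤ t - p.1
        ∧ t - ε / Real.sqrt 2 - p.1 ≤ |x + ε / Real.sqrt 2 - p.2|
        ∧ t - ε / Real.sqrt 2 - p.1 ≤ |x - ε / Real.sqrt 2 - p.2|}
      = ENNReal.ofReal (ε ^ 2) := by
  rw [← two_mul_div_sqrt_two_mul_self, ENNReal.ofReal_mul (by positivity)]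
  exact stmt10_general (div_sqrt_two_add_self ε ▸ (le_div_iff₀ (by positivity)).mp hεt)
end

section
/- For every a ∈ ℝ, every real p ≥ 1 and every T > 0 there exists a constant C > 0 such that for all t ∈ (0, T], all x ∈ ℝ, and all ε with 0 < ε ≤ min(1, t/√2): |∫∫_{D₄} 2^{−p}·e^{−ap(t−s)/2} ds dy − ε²/2^p| ≤ C·ε³, where D₄ := {(s, y) : 0 ≤ s ≤ t, |x − y| ≤ t − s, |x + ε/√2 − y| ≥ t − ε/√2 − s, |x − ε/√2 − y| ≥ t − ε/√2 − s}. -/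
open MeasureTheory Real

/- In the characteristic coordinates `u = (t - s) - (y - x)` and `v = (t - s) + (y - x)`, which
double areas, the set `D₄` is the square `[0, √2 ε]²` together with pieces of the two axes, so its
area is `ε²`. The integrand is a Lipschitz function of `t - s`, which is at most `√2 ε` on the
square; replacing it by its value `2⁻ᵖ` at the vertex `(t, x)` therefore costs `O(ε) · ε²`. -/

lemma norm_setIntegral_sub_smul_le_of_lipschitzOnWith {X E : Type*} [MetricSpace X]
    [MeasurableSpace X] [BorelSpace X] [NormedAddCommGroup E] [NormedSpace ℝ E] [CompleteSpace E]
    {μ : Measure X} [IsFiniteMeasureOnCompacts μ] {S : Set X} (hS : IsCompact S) {F : X → E}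
    {K : NNReal} (hF : LipschitzOnWith K F S) {x₀ : X} (hx₀ : x₀ ∈ S) {r : ℝ}
    (hr : S ⊆ Metric.closedBall x₀ r) :
    ‖(∫ x in S, F x ∂μ) - μ.real S • F x₀‖ ≤ K * r * μ.real S := by
  have hFint : IntegrableOn F S μ := hF.continuousOn.integrableOn_compact hS
  have hconst : IntegrableOn (fun _ => F x₀) S μ := integrableOn_const hS.measure_lt_top.ne
  rw [← setIntegral_const, ← integral_sub hFint hconst]
  refine norm_setIntegral_le_of_norm_le_const hS.measure_lt_top fun x hx => ?_
  rw [← dist_eq_norm]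
  exact (hF.dist_le_mul x hx x₀ hx₀).trans (by gcongr; exact hr hx)

/-- The characteristic coordinates `(u, v)` of a point `(s, y)` relative to `(t, x)`, oriented so
that the backward light cone of `(t, x)` is the quadrant `0 ≤ u`, `0 ≤ v`. -/
def characteristicCoord (t x : ℝ) (q : ℝ × ℝ) : ℝ × ℝ :=
  (t - q.1 - (q.2 - x), t - q.1 + (q.2 - x))

/-- The closed square with vertex `(t, x)` and sides of length `√2 * d` along the characteristics;
it is `[0, 2 * d]²` in characteristic coordinates. -/
def characteristicSquare (t x d : ℝ) : Set (ℝ × ℝ) :=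
  characteristicCoord t x ⁻¹' (Set.Icc 0 (2 * d) ×ˢ Set.Icc 0 (2 * d))

/-- The set `D₄` for `d = ε / √2`: the part of the backward light cone of `(t, x)` outside the
cones of `(t - d, x + d)` and `(t - d, x - d)`, whose lateral boundaries, null sets, are kept. -/
def coneRemainder (t x d : ℝ) : Set (ℝ × ℝ) :=
  {q | 0 ≤ q.1 ∧ q.1 ≤ t ∧ |x - q.2| ≤ t - q.1
    ∧ t - d - q.1 ≤ |x + d - q.2| ∧ t - d - q.1 ≤ |x - d - q.2|}

section Geometry

variable {t x d : ℝ}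

lemma volume_preimage_characteristicCoord (t x : ℝ) (S : Set (ℝ × ℝ)) :
    volume (characteristicCoord t x ⁻¹' S) = ENNReal.ofReal 2⁻¹ * volume S := by
  let L : ℝ × ℝ →ₗ[ℝ] ℝ × ℝ :=
    Matrix.toLin (Module.Basis.finTwoProd ℝ) (Module.Basis.finTwoProd ℝ) !![1, 1; 1, -1]
  have hdet : L.det = -2 := by
    rw [LinearMap.det_toLin, Matrix.det_fin_two_of]
    norm_num
  have hreflect (S' : Set (ℝ × ℝ)) : volume ((fun q => (t, x) - q) ⁻¹' S') = volume S' :=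
    (Measure.measurePreserving_sub_left volume (t, x)).measure_preimage_equiv
      (f := MeasurableEquiv.subLeft (t, x)) S'
  have hcoord : characteristicCoord t x = L ∘ fun q => (t, x) - q := by
    ext q <;> simp [characteristicCoord, L, Matrix.toLin_finTwoProd_apply]; ring
  rw [hcoord, Set.preimage_comp, hreflect,
    Measure.addHaar_preimage_linearMap volume (by rw [hdet]; norm_num), hdet,
    abs_inv, abs_neg, abs_two]

lemma volume_real_characteristicSquare (hd : 0 ≤ d) :
    volume.real (characteristicSquare t x d) = 2 * d ^ 2 := by
  rw [measureReal_def, characteristicSquare, volume_preimage_characteristicCoord,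
    Measure.volume_eq_prod, Measure.prod_prod, volume_Icc, sub_zero, ENNReal.toReal_mul,
    ENNReal.toReal_mul, ENNReal.toReal_ofReal (by positivity),
    ENNReal.toReal_ofReal (by positivity)]
  ring

lemma vertex_mem_characteristicSquare (hd : 0 ≤ d) : (t, x) ∈ characteristicSquare t x d := by
  simp [characteristicSquare, characteristicCoord, hd]

lemma sub_fst_mem_Icc_of_mem_characteristicSquare {q : ℝ × ℝ}
    (hq : q ∈ characteristicSquare t x d) : t - q.1 ∈ Set.Icc 0 (2 * d) := by
  obtain ⟨⟨hu, hu'⟩, hv, hv'⟩ := hq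
  simp only [characteristicCoord] at hu hu' hv hv'
  constructor <;> linarith

lemma characteristicSquare_subset_closedBall (t x d : ℝ) :
    characteristicSquare t x d ⊆ Metric.closedBall (t, x) (2 * d) := by
  intro q hq
  obtain ⟨hs, hs'⟩ := sub_fst_mem_Icc_of_mem_characteristicSquare hq
  obtain ⟨⟨hu, hu'⟩, hv, hv'⟩ := hq
  simp only [characteristicCoord] at hu hu' hv hv'
  rw [Metric.mem_closedBall, Prod.dist_eq, max_le_iff, Real.dist_eq, Real.dist_eq, abs_le, abs_le]
  refine ⟨⟨?_, ?_⟩, ?_, ?_⟩ <;> linarith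

lemma isCompact_characteristicSquare (t x d : ℝ) : IsCompact (characteristicSquare t x d) := by
  refine Metric.isCompact_of_isClosed_isBounded
    ((isClosed_Icc.prod isClosed_Icc).preimage ?_)
    (Metric.isBounded_closedBall.subset (characteristicSquare_subset_closedBall t x d))
  unfold characteristicCoord
  fun_prop

lemma mem_coneRemainder_iff_mem_characteristicSquare {q : ℝ × ℝ} (hdt : 2 * d ≤ t)
    (hu : (characteristicCoord t x q).1 ≠ 0) (hv : (characteristicCoord t x q).2 ≠ 0) :
    q ∈ coneRemainder t x d ↔ q ∈ characteristicSquare t x d := by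
  simp only [coneRemainder, characteristicSquare, characteristicCoord, Set.mem_ofPred_eq,
    Set.mem_preimage, Set.mem_prod, Set.mem_Icc, abs_le, le_abs] at hu hv ⊢
  constructor
  · rintro ⟨-, -, ⟨hv₀, hu₀⟩, hright, hleft⟩
    have hu_pos : 0 < t - q.1 - (q.2 - x) := lt_of_le_of_ne (by linarith) hu.symm
    have hv_pos : 0 < t - q.1 + (q.2 - x) := lt_of_le_of_ne (by linarith) hv.symm
    have hv_le : t - q.1 + (q.2 - x) ≤ 2 * d := by
      rcases hright with h | h <;> linarith
    have hu_le : t - q.1 - (q.2 - x) ≤ 2 * d := by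
      rcases hleft with h | h <;> linarith
    exact ⟨⟨hu_pos.le, hu_le⟩, hv_pos.le, hv_le⟩
  · rintro ⟨⟨hu₀, hu_le⟩, hv₀, hv_le⟩
    refine ⟨?_, ?_, ⟨?_, ?_⟩, Or.inl ?_, Or.inr ?_⟩ <;> linarith

lemma ae_characteristicCoord_ne_zero (t x : ℝ) :
    ∀ᵐ q, (characteristicCoord t x q).1 ≠ 0 ∧ (characteristicCoord t x q).2 ≠ 0 := by
  have haxes : volume (({0} ×ˢ Set.univ ∪ Set.univ ×ˢ {0}) : Set (ℝ × ℝ)) = 0 := by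
    simp [Measure.volume_eq_prod]
  have hpreimage := volume_preimage_characteristicCoord t x ({0} ×ˢ Set.univ ∪ Set.univ ×ˢ {0})
  rw [haxes, mul_zero] at hpreimage
  filter_upwards [measure_eq_zero_iff_ae_notMem.1 hpreimage] with q hq
  simpa using hq

lemma coneRemainder_ae_eq_characteristicSquare (hdt : 2 * d ≤ t) :
    coneRemainder t x d =ᵐ[volume] characteristicSquare t x d := by
  filter_upwards [ae_characteristicCoord_ne_zero t x] with q hq
  exact propext (mem_coneRemainder_iff_mem_characteristicSquare hdt hq.1 hq.2)

end Geometry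

lemma norm_setIntegral_coneRemainder_sub_le {E : Type*} [NormedAddCommGroup E] [NormedSpace ℝ E]
    [CompleteSpace E] {t x d : ℝ} (hd : 0 ≤ d) (hdt : 2 * d ≤ t) {F : ℝ × ℝ → E} {K : NNReal}
    (hF : LipschitzOnWith K F (characteristicSquare t x d)) :
    ‖(∫ q in coneRemainder t x d, F q) - (2 * d ^ 2) • F (t, x)‖ ≤ 4 * K * d ^ 3 := by
  rw [setIntegral_congr_set (coneRemainder_ae_eq_characteristicSquare hdt),
    ← volume_real_characteristicSquare (t := t) (x := x) hd]
  calc _ ≤ K * (2 * d) * volume.real (characteristicSquare t x d) :=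
        norm_setIntegral_sub_smul_le_of_lipschitzOnWith (isCompact_characteristicSquare t x d) hF
          (vertex_mem_characteristicSquare hd) (characteristicSquare_subset_closedBall t x d)
    _ = 4 * K * d ^ 3 := by rw [volume_real_characteristicSquare hd]; ring

lemma lipschitzOnWith_comp_sub_fst_characteristicSquare {Y : Type*} [PseudoEMetricSpace Y]
    {f : ℝ → Y} {K : NNReal} {t x d : ℝ} (hf : LipschitzOnWith K f (Set.Icc 0 (2 * d))) :
    LipschitzOnWith K (fun q : ℝ × ℝ => f (t - q.1)) (characteristicSquare t x d) := by
  have htime : LipschitzWith 1 fun q : ℝ × ℝ => t - q.1 := by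
    rw [← mul_one 1]
    exact (IsometryEquiv.subLeft t).isometry.lipschitz.comp LipschitzWith.prod_fst
  rw [← mul_one K]
  exact hf.comp htime.lipschitzOnWith fun _ => sub_fst_mem_Icc_of_mem_characteristicSquare

theorem stmt11_general (a p : ℝ) :
    ∃ C : ℝ, 0 < C ∧ ∀ t x ε : ℝ, 0 < ε → ε ≤ min 1 (t / √2) →
      |(∫ z in coneRemainder t x (ε / √2), (2 : ℝ) ^ (-p) * exp (-(a * p * (t - z.1)) / 2))
        - ε ^ 2 / 2 ^ p| ≤ C * ε ^ 3 := by
  have hkernel : ContDiff ℝ 1 fun τ : ℝ => (2 : ℝ) ^ (-p) * exp (-(a * p * τ) / 2) := by fun_prop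
  obtain ⟨K, hK⟩ := hkernel.contDiffOn.exists_lipschitzOnWith one_ne_zero (convex_Icc 0 2)
    isCompact_Icc
  refine ⟨4 * K + 1, by positivity, fun t x ε hε hεt => ?_⟩
  obtain ⟨hε1, hεt⟩ := le_min_iff.1 hεt
  have hd : 0 ≤ ε / √2 := by positivity
  have hdε : ε / √2 ≤ ε := div_le_self hε.le (one_le_sqrt.2 one_le_two)
  have hdt : 2 * (ε / √2) ≤ t := by
    calc 2 * (ε / √2) ≤ 2 * (t / √2 / √2) := by gcongr
      _ = t := by rw [div_div, mul_self_sqrt zero_le_two]; ring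
  have harea : 2 * (ε / √2) ^ 2 = ε ^ 2 := by rw [div_pow, sq_sqrt zero_le_two]; ring
  have hvertex : (2 * (ε / √2) ^ 2) • ((2 : ℝ) ^ (-p) * exp (-(a * p * (t - t)) / 2))
      = ε ^ 2 / 2 ^ p := by
    rw [harea, sub_self, rpow_neg zero_le_two]
    simp [div_eq_mul_inv]
  have hF := lipschitzOnWith_comp_sub_fst_characteristicSquare (t := t) (x := x) (d := ε / √2)
    (hK.mono (Set.Icc_subset_Icc_right (by linarith)))
  rw [← hvertex]
  calc _ ≤ 4 * K * (ε / √2) ^ 3 := norm_setIntegral_coneRemainder_sub_le hd hdt hF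
    _ ≤ (4 * K + 1) * ε ^ 3 := by gcongr; linarith

theorem stmt11 (a : ℝ) (p : ℝ) (hp : 1 ≤ p) (T : ℝ) (hT : 0 < T) :
    ∃ C : ℝ, 0 < C ∧ ∀ t ∈ Set.Ioc (0 : ℝ) T, ∀ x : ℝ, ∀ ε : ℝ,
      0 < ε → ε ≤ min 1 (t / Real.sqrt 2) →
      |(∫ z in {q : ℝ × ℝ | 0 ≤ q.1 ∧ q.1 ≤ t ∧ |x - q.2| ≤ t - q.1
            ∧ t - ε / Real.sqrt 2 - q.1 ≤ |x + ε / Real.sqrt 2 - q.2|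
            ∧ t - ε / Real.sqrt 2 - q.1 ≤ |x - ε / Real.sqrt 2 - q.2|},
          (2 : ℝ) ^ (-p) * Real.exp (-(a * p * (t - z.1)) / 2))
        - ε ^ 2 / 2 ^ p| ≤ C * ε ^ 3 := by
  obtain ⟨C, hC, hbound⟩ := stmt11_general a p
  exact ⟨C, hC, fun t _ => hbound t⟩
end

section
/- For every a ∈ ℝ, every real p ≥ 1 and every T > 0 there exists a constant C > 0 such that for all t ∈ (0, T], all x ∈ ℝ, and all ε with 0 < ε ≤ min(1, t/√2): ∫∫_{D₁} |(1/2)·e^{−a(t−s)/2} − (1/2)·e^{−a(t−ε/√2−s)/2}|^p ds dy ≤ C·ε^{1+p}, where D₁ := {(s, y) : 0 ≤ s ≤ t, |x − y| ≤ t − s, |x + ε/√2 − y| < t − ε/√2 − s, |x − ε/√2 − y| ≥ t − ε/√2 − s}. -/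
open MeasureTheory Real

/-!
In the characteristic coordinates `(s, s + y)` the region `D₁` lies in a rectangle with side
lengths `t` and `2h`, where `h = ε / √2`; the change of coordinates is a shear, so `D₁` has area
at most `2th`. On `D₁` both time lags `t - s` and `t - h - s` lie in `[0, t]`, where the damping
factor is Lipschitz, so the integrand is `O(h ^ p)`.
-/

open Set
open scoped NNReal

/-- The region `D₁` of the paper, for a spacetime shift of size `h` (there `h = ε / √2`): the
points of the backward light cone of `(t, x)` that lie inside the cone of `(t - h, x + h)` but
outside the cone of `(t - h, x - h)`. The boundary conventions are those of the indicator of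
`|x| < t` in the wave kernel. -/
def shiftedConeDiff (t x h : ℝ) : Set (ℝ × ℝ) :=
  {q | 0 ≤ q.1 ∧ q.1 ≤ t ∧ |x - q.2| ≤ t - q.1
    ∧ |x + h - q.2| < t - h - q.1 ∧ t - h - q.1 ≤ |x - h - q.2|}

namespace shiftedConeDiff

variable {t x h : ℝ}

lemma subset_preimage_shear (hh : 0 ≤ h) :
    shiftedConeDiff t x h ⊆
      (fun q : ℝ × ℝ ↦ (q.1, q.1 + q.2)) ⁻¹' (Icc 0 t ×ˢ Icc (x + t - 2 * h) (x + t)) := by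
  rintro ⟨s, y⟩ ⟨hs, hst, -, hin, hout⟩
  obtain ⟨hy_lt, hy_gt⟩ := abs_lt.1 hin
  refine ⟨⟨hs, hst⟩, ?_, ?_⟩
  · -- The other alternative, `y ≤ x - (t - s)`, is incompatible with `hy_gt`.
    rcases le_abs.1 hout with hleft | hright <;> dsimp only at * <;> linarith
  · dsimp only at *
    linarith

lemma volume_le (hh : 0 ≤ h) :
    volume (shiftedConeDiff t x h) ≤ ENNReal.ofReal (t * (2 * h)) :=
  calc volume (shiftedConeDiff t x h)
      ≤ volume ((fun q : ℝ × ℝ ↦ (q.1, q.1 + q.2)) ⁻¹'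
          (Icc 0 t ×ˢ Icc (x + t - 2 * h) (x + t))) :=
        measure_mono (subset_preimage_shear hh)
    _ = volume (Icc 0 t ×ˢ Icc (x + t - 2 * h) (x + t)) :=
        (measurePreserving_prod_add volume volume).measure_preimage
          (measurableSet_Icc.prod measurableSet_Icc).nullMeasurableSet
    _ = ENNReal.ofReal (t * (2 * h)) := by
        rw [Measure.volume_eq_prod, Measure.prod_prod, volume_Icc, volume_Icc,
          ← ENNReal.ofReal_mul' (by linarith)]
        ring_nf

lemma volume_lt_top (hh : 0 ≤ h) : volume (shiftedConeDiff t x h) < ⊤ :=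
  (volume_le hh).trans_lt ENNReal.ofReal_lt_top

lemma volume_real_le (ht : 0 ≤ t) (hh : 0 ≤ h) :
    volume.real (shiftedConeDiff t x h) ≤ t * (2 * h) :=
  ENNReal.toReal_le_of_le_ofReal (by positivity) (volume_le hh)

variable {E : Type*} [SeminormedAddCommGroup E] {g : ℝ → E} {K : ℝ≥0}

lemma norm_sub_le_of_lipschitzOnWith (hg : LipschitzOnWith K g (Icc 0 t)) (hh : 0 ≤ h)
    {q : ℝ × ℝ} (hq : q ∈ shiftedConeDiff t x h) :
    ‖g (t - q.1) - g (t - h - q.1)‖ ≤ K * h := by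
  obtain ⟨hs, hst, -, hin, -⟩ := hq
  have hlag : t - q.1 ∈ Icc 0 t := ⟨sub_nonneg.2 hst, sub_le_self t hs⟩
  have hlag_shift : t - h - q.1 ∈ Icc 0 t := ⟨(abs_nonneg _).trans hin.le, by linarith⟩
  calc ‖g (t - q.1) - g (t - h - q.1)‖
      ≤ K * ‖t - q.1 - (t - h - q.1)‖ := hg.norm_sub_le hlag hlag_shift
    _ = K * h := by rw [show t - q.1 - (t - h - q.1) = h by ring, norm_of_nonneg hh]

lemma setIntegral_norm_sub_rpow_le (hg : LipschitzOnWith K g (Icc 0 t)) {p : ℝ} (hp : 0 ≤ p)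
    (ht : 0 ≤ t) (hh : 0 ≤ h) :
    ∫ q in shiftedConeDiff t x h, ‖g (t - q.1) - g (t - h - q.1)‖ ^ p
      ≤ 2 * K ^ p * t * h ^ (1 + p) := by
  have hbound : ∀ q ∈ shiftedConeDiff t x h,
      ‖‖g (t - q.1) - g (t - h - q.1)‖ ^ p‖ ≤ (K * h) ^ p := fun q hq ↦ by
    rw [norm_of_nonneg (by positivity)]
    exact rpow_le_rpow (norm_nonneg _) (norm_sub_le_of_lipschitzOnWith hg hh hq) hp
  calc ∫ q in shiftedConeDiff t x h, ‖g (t - q.1) - g (t - h - q.1)‖ ^ p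
      ≤ (K * h) ^ p * volume.real (shiftedConeDiff t x h) :=
        (le_norm_self _).trans (norm_setIntegral_le_of_norm_le_const (volume_lt_top hh) hbound)
    _ ≤ (K * h) ^ p * (t * (2 * h)) := by gcongr; exact volume_real_le ht hh
    _ = 2 * K ^ p * t * h ^ (1 + p) := by
        rw [mul_rpow K.coe_nonneg hh, rpow_one_add' hh (by positivity)]
        ring

end shiftedConeDiff

theorem stmt12_general {E : Type*} [SeminormedAddCommGroup E] {g : ℝ → E} {p T : ℝ}
    (hg : LocallyLipschitzOn (Icc 0 T) g) (hp : 0 ≤ p) (hT : 0 ≤ T) :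
    ∃ C : ℝ, 0 < C ∧ ∀ t ∈ Icc 0 T, ∀ x ε : ℝ, 0 ≤ ε →
      ∫ q in shiftedConeDiff t x (ε / √2), ‖g (t - q.1) - g (t - ε / √2 - q.1)‖ ^ p
        ≤ C * ε ^ (1 + p) := by
  obtain ⟨K, hK⟩ := hg.exists_lipschitzOnWith_of_compact isCompact_Icc
  refine ⟨2 * K ^ p * T + 1, by positivity, fun t ⟨ht, htT⟩ x ε hε ↦ ?_⟩
  have hshift : ε / √2 ≤ ε := div_le_self hε (one_le_sqrt.2 one_le_two)
  calc ∫ q in shiftedConeDiff t x (ε / √2), ‖g (t - q.1) - g (t - ε / √2 - q.1)‖ ^ p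
      ≤ 2 * K ^ p * t * (ε / √2) ^ (1 + p) :=
        shiftedConeDiff.setIntegral_norm_sub_rpow_le (hK.mono (Icc_subset_Icc_right htT)) hp ht
          (by positivity)
    _ ≤ 2 * K ^ p * T * ε ^ (1 + p) := by gcongr
    _ ≤ (2 * K ^ p * T + 1) * ε ^ (1 + p) := by gcongr; exact le_add_of_nonneg_right zero_le_one

theorem stmt12 (a : ℝ) (p : ℝ) (hp : 1 ≤ p) (T : ℝ) (hT : 0 < T) :
    ∃ C : ℝ, 0 < C ∧ ∀ t ∈ Set.Ioc (0 : ℝ) T, ∀ x : ℝ, ∀ ε : ℝ,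
      0 < ε → ε ≤ min 1 (t / Real.sqrt 2) →
      (∫ z in {q : ℝ × ℝ | 0 ≤ q.1 ∧ q.1 ≤ t ∧ |x - q.2| ≤ t - q.1
            ∧ |x + ε / Real.sqrt 2 - q.2| < t - ε / Real.sqrt 2 - q.1
            ∧ t - ε / Real.sqrt 2 - q.1 ≤ |x - ε / Real.sqrt 2 - q.2|},
          |(1 / 2 : ℝ) * Real.exp (-(a * (t - z.1)) / 2)
            - (1 / 2 : ℝ) * Real.exp (-(a * (t - ε / Real.sqrt 2 - z.1)) / 2)| ^ p)
        ≤ C * ε ^ (1 + p) := by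
  have hsmooth : ContDiff ℝ 1 fun r : ℝ ↦ (1 / 2 : ℝ) * exp (-(a * r) / 2) := by fun_prop
  obtain ⟨C, hC, hle⟩ :=
    stmt12_general hsmooth.locallyLipschitz.locallyLipschitzOn (zero_le_one.trans hp) hT.le
  exact ⟨C, hC, fun t ht x ε hε _ ↦ hle t (Ioc_subset_Icc_self ht) x ε hε.le⟩
end
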